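/- Let (A₁,V₁,D₁,γ₁) and (A₂,V₂,D₂,γ₂) be even algebraic spectral triples over a field K with char K ≠ 2, and assume γ₁ = π₁(η₁) and γ₂ = π₂(η₂) for some η₁ ∈ A₁, η₂ ∈ A₂. Fix n ≥ 1 and a finite family indexed by t, where for each t there are i_t, j_t ≥ 0 with i_t + j_t = n − 1, elements a_{t,0},…,a_{t,i_t} ∈ A₁ and b_{t,0},…,b_{t,j_t} ∈ A₂. Set P_t := π₁(a_{t,0}) ∘ [D₁,π₁(a_{t,1})] ∘ ⋯ ∘ [D₁,π₁(a_{t,i_t})], P′_t := [D₁,π₁(a_{t,0})] ∘ ⋯ ∘ [D₁,π₁(a_{t,i_t})] in End_K(V₁), and Q_t := π₂(b_{t,0}) ∘ [D₂,π₂(b_{t,1})] ∘ ⋯ ∘ [D₂,π₂(b_{t,j_t})], Q′_t := [D₂,π₂(b_{t,0})] ∘ ⋯ ∘ [D₂,π₂(b_{t,j_t})] in End_K(V₂). If Σ_t (P_t ∘ γ₁^{j_t}) ⊗ Q_t = 0 in End_K(V₁ ⊗_K V₂), then Σ_t [ (P′_t ∘ γ₁^{j_t}) ⊗ Q_t + (−1)^{i_t}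 (P_t ∘ γ₁^{j_t+1}) ⊗ Q′_t ] lies in the K-subspace Σ_{i+j=n} [ span{ (P ∘ γ₁^j) ⊗ Q : P ∈ π₁(dJ₀^{i−1}), Q ∈ π₂(Ω^j) } + span{ (P ∘ γ₁^j) ⊗ Q : P ∈ π₁(Ω^i), Q ∈ π₂(dJ₀^{j−1}) } ] of End_K(V₁ ⊗_K V₂), where π(dJ₀^{−1}) := {0}. -/

import Mathlib

/-!
The point is that, once the grading is represented, `D` itself is a one-form, and modulo junk the
differential of a form is its graded commutator with `D`.

Let `formPairs k ⊆ End V × End V` be the image of the universal `k`-forms under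
`ω ↦ (π ω, π (dω))`, so that `dJ₀ᵏ` consists of the `T` with `(0, T) ∈ formPairs k`. Since
`γ = π η` anticommutes with `D`, one has `[D, γ] = 2 D γ`, hence `D = -½ γ [D, γ]`, and left
multiplication by the universal one-form `-½ η dη` shows that `formPairs` is stable under
`(P, T) ↦ (D P, 2 D² P - D T)` (`formPairs_D`). It follows by induction that
`(P, D P - (-1)ᵏ P D)` belongs to `formPairs k` for every `P = π(a)[D, π(c₀)]⋯[D, π(c_{k-1})]`
(`gradedComm_mem_formPairs`); consequently `P' - (D P - (-1)ᵏ P D)` is junk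
(`sub_gradedComm_mem_dJSet`).

Replacing `P'_t` and `Q'_t` by graded commutators therefore changes the sum only by an element of
the target subspace. After the replacement, since `i_t + j_t = n - 1` is constant, the sum is the
graded commutator of `D₁ ⊗ 1 + γ₁ ⊗ D₂` with `Σ_t P_t γ₁^{j_t} ⊗ Q_t`, which is zero.
-/

/-!
STATEMENT 7: the key computation (Lemma 2.11 of the paper): for product triples whose
gradings are represented, the image under `π̃ ∘ d̃` of an element of `J̃₀^{n-1}` lies in
`Σ_{i+j=n} π₁(dJ₀^{i-1})γ₁^j ⊗ π₂(Ω^j) + π₁(Ω^i)γ₁^j ⊗ π₂(dJ₀^{j-1})`.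
-/

open TensorProduct

variable (K : Type*) [Field K]

section Defs

variable {A V : Type*} [Ring A] [Algebra K A] [AddCommGroup V] [Module K V]

/-- The ordered product `[D,π(c₀)]∘⋯∘[D,π(c_{k-1})]`. -/
def prodComm (π : A →ₐ[K] Module.End K V) (D : Module.End K V) {k : ℕ} (c : Fin k → A) :
    Module.End K V :=
  (List.ofFn fun s : Fin k => D * π (c s) - π (c s) * D).prod

/-- The subspace `π(Ω^k)` of `End_K(V)`: the span of all
`π(a₀)∘[D,π(a₁)]∘⋯∘[D,π(a_k)]` (for `k = 0` this is `π(A)`). -/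
def piOmega (π : A →ₐ[K] Module.End K V) (D : Module.End K V) (k : ℕ) :
    Submodule K (Module.End K V) :=
  Submodule.span K {T | ∃ (a : A) (c : Fin k → A), T = π a * prodComm K π D c}

/-- The set `π(dJ₀^{i-1}) ⊆ End_K(V)` (with `i` factors), and `π(dJ₀^{-1}) := {0}`:
all finite sums `Σ_t [D,π(a_{t,0})]∘⋯∘[D,π(a_{t,i-1})]` such that
`Σ_t π(a_{t,0})∘[D,π(a_{t,1})]∘⋯∘[D,π(a_{t,i-1})] = 0`. -/
def dJSet (π : A →ₐ[K] Module.End K V) (D : Module.End K V) : ℕ → Set (Module.End K V)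
  | 0 => {0}
  | (k + 1) =>
    {T | ∃ (m : ℕ) (x : Fin m → A) (c : Fin m → Fin k → A),
      (∑ t : Fin m, π (x t) * prodComm K π D (c t)) = 0 ∧
      T = ∑ t : Fin m, (D * π (x t) - π (x t) * D) * prodComm K π D (c t)}

end Defs

section Pairs

variable {A V : Type*} [Ring A] [Algebra K A] [AddCommGroup V] [Module K V]

/-- The pairs `(π ω, π (dω))` for `ω` a universal `k`-form: the span of all
`(π(a)[D,π(c₀)]⋯[D,π(c_{k-1})], [D,π(a)][D,π(c₀)]⋯[D,π(c_{k-1})])`. -/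
def formPairs (π : A →ₐ[K] Module.End K V) (D : Module.End K V) (k : ℕ) :
    Submodule K (Module.End K V × Module.End K V) :=
  Submodule.span K {p | ∃ (a : A) (c : Fin k → A),
    p = (π a * prodComm K π D c, (D * π a - π a * D) * prodComm K π D c)}

variable {K} {π : A →ₐ[K] Module.End K V} {D : Module.End K V}

theorem prodComm_succ {k : ℕ} (c : Fin (k + 1) → A) :
    prodComm K π D c =
      (D * π (c 0) - π (c 0) * D) * prodComm K π D (fun s : Fin k => c s.succ) := by
  simp [prodComm, List.ofFn_succ]

theorem mem_dJSet_of_formPairs {k : ℕ} {T : Module.End K V}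
    (h : ((0 : Module.End K V), T) ∈ formPairs K π D k) : T ∈ dJSet K π D (k + 1) := by
  obtain ⟨m, f, g, hg⟩ := Submodule.mem_span_set'.1 h
  choose a c hac using fun t => (g t).2
  simp only [hac] at hg
  -- the scalars of the linear combination are absorbed into the coefficients `a t`
  refine ⟨m, fun t => f t • a t, c, ?_, ?_⟩
  · simpa [Prod.fst_sum, smul_mul_assoc] using congrArg Prod.fst hg
  · simpa [Prod.snd_sum, smul_mul_assoc, mul_smul_comm, ← smul_sub] using
      (congrArg Prod.snd hg).symm

/-- Left multiplication of a form by an algebra element: `d(a ω) = da ω + a dω`. -/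
theorem formPairs_pi (a : A) {k : ℕ} {p : Module.End K V × Module.End K V}
    (hp : p ∈ formPairs K π D k) :
    (π a * p.1, (D * π a - π a * D) * p.1 + π a * p.2) ∈ formPairs K π D k := by
  induction hp using Submodule.span_induction with
  | mem p hp =>
    obtain ⟨x, c, rfl⟩ := hp
    refine Submodule.subset_span ⟨a * x, c, ?_⟩
    simp only [map_mul, Prod.mk.injEq]
    constructor <;> noncomm_ring
  | zero =>
    convert (formPairs K π D _).zero_mem using 1
    simp
  | add p q _ _ hp hq =>
    convert Submodule.add_mem _ hp hq using 1
    simp only [Prod.fst_add, Prod.snd_add, Prod.mk_add_mk, Prod.mk.injEq]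
    constructor <;> noncomm_ring
  | smul r p _ hp =>
    convert Submodule.smul_mem _ r hp using 1
    simp [smul_add]

/-- Left multiplication of a form by an exact one-form: `d(da ω) = -da dω`. -/
theorem formPairs_comm (a : A) {k : ℕ} {p : Module.End K V × Module.End K V}
    (hp : p ∈ formPairs K π D k) :
    ((D * π a - π a * D) * p.1, -((D * π a - π a * D) * p.2)) ∈ formPairs K π D (k + 1) := by
  induction hp using Submodule.span_induction with
  | mem p hp =>
    obtain ⟨x, c, rfl⟩ := hp
    -- `da x c = d(a x) c - a dx c`
    have h₁ : _ ∈ formPairs K π D (k + 1) :=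
      Submodule.subset_span ⟨1, (Fin.cons (a * x) c : Fin (k + 1) → A), rfl⟩
    have h₂ : _ ∈ formPairs K π D (k + 1) :=
      Submodule.subset_span ⟨a, (Fin.cons x c : Fin (k + 1) → A), rfl⟩
    convert Submodule.sub_mem _ h₁ h₂ using 1
    simp only [prodComm_succ, Fin.cons_zero, Fin.cons_succ, map_mul, map_one, Prod.mk_sub_mk,
      Prod.mk.injEq]
    constructor <;> noncomm_ring
  | zero =>
    convert (formPairs K π D _).zero_mem using 1
    simp
  | add p q _ _ hp hq =>
    convert Submodule.add_mem _ hp hq using 1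
    simp only [Prod.fst_add, Prod.snd_add, Prod.mk_add_mk, Prod.mk.injEq]
    constructor <;> noncomm_ring
  | smul r p _ hp =>
    convert Submodule.smul_mem _ r hp using 1
    simp

/-- Left multiplication of a form by the one-form `-½ η dη`, which is represented by `D`. -/
theorem formPairs_D {γ : Module.End K V} (hγ : γ * γ = 1) (hγD : γ * D = -(D * γ))
    {η : A} (hη : π η = γ) (hchar : (2 : K) ≠ 0) {k : ℕ}
    {p : Module.End K V × Module.End K V} (hp : p ∈ formPairs K π D k) :
    (D * p.1, (2 : K) • (D * D * p.1) - D * p.2) ∈ formPairs K π D (k + 1) := by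
  have h := Submodule.smul_mem _ (-(2 : K)⁻¹) (formPairs_pi η (formPairs_comm η hp))
  have hc : D * γ - γ * D = (2 : K) • (D * γ) := by
    rw [hγD, sub_neg_eq_add, two_smul]
  have h1 : ∀ x, γ * (D * (γ * x)) = -(D * x) := fun x => by
    rw [← mul_assoc γ, hγD, neg_mul, mul_assoc D, ← mul_assoc γ, hγ, one_mul]
  rw [hη, hc] at h
  convert h using 1
  refine Prod.ext ?_ ?_
  · simp [mul_assoc, h1, hchar]
  · simp [mul_assoc, h1, smul_smul, hchar, sub_eq_add_neg, add_comm]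

/-- The universal form defining `P = π(a)[D,π(c₀)]⋯[D,π(c_{k-1})]` may be replaced by another form
representing `P` whose differential is represented by the graded commutator of `D` with `P`. -/
theorem gradedComm_mem_formPairs {γ : Module.End K V} (hγ : γ * γ = 1)
    (hγD : γ * D = -(D * γ)) {η : A} (hη : π η = γ) (hchar : (2 : K) ≠ 0) {k : ℕ}
    (a : A) (c : Fin k → A) :
    (π a * prodComm K π D c, D * (π a * prodComm K π D c) -
      (-1 : K) ^ k • (π a * prodComm K π D c * D)) ∈ formPairs K π D k := by
  have left : ∀ {k : ℕ} (a : A) {P : Module.End K V},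
      (P, D * P - (-1 : K) ^ k • (P * D)) ∈ formPairs K π D k →
      (π a * P, D * (π a * P) - (-1 : K) ^ k • (π a * P * D)) ∈ formPairs K π D k := by
    intro k a P hP
    convert formPairs_pi a hP using 2
    simp only [mul_sub, sub_mul, mul_smul_comm, mul_assoc]
    abel
  have leftD : ∀ {k : ℕ} {P : Module.End K V},
      (P, D * P - (-1 : K) ^ k • (P * D)) ∈ formPairs K π D k →
      (D * P, D * (D * P) - (-1 : K) ^ (k + 1) • (D * P * D)) ∈ formPairs K π D (k + 1) := by
    intro k P hP
    convert formPairs_D hγ hγD hη hchar hP using 2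
    simp only [mul_sub, mul_smul_comm, mul_assoc, two_smul, pow_succ, mul_neg, mul_one, neg_smul]
    abel
  refine left a ?_
  clear a
  induction k with
  | zero =>
    refine Submodule.subset_span ⟨1, c, ?_⟩
    simp [prodComm]
  | succ k ih =>
    rw [prodComm_succ]
    have hP := ih (fun s => c s.succ)
    -- `[D, a] P = D (a P) - a (D P)`
    convert Submodule.sub_mem _ (leftD (left (c 0) hP)) (left (c 0) (leftD hP)) using 1
    simp only [Prod.mk_sub_mk, Prod.mk.injEq, sub_mul, mul_sub, smul_sub, mul_assoc, true_and]
    abel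

/-- Modulo junk, the differential is the graded commutator with `D`. -/
theorem sub_gradedComm_mem_dJSet {γ : Module.End K V} (hγ : γ * γ = 1)
    (hγD : γ * D = -(D * γ)) {η : A} (hη : π η = γ) (hchar : (2 : K) ≠ 0) {k : ℕ}
    (a : Fin (k + 1) → A) :
    prodComm K π D a - (D * (π (a 0) * prodComm K π D (fun s : Fin k => a s.succ)) -
      (-1 : K) ^ k • (π (a 0) * prodComm K π D (fun s : Fin k => a s.succ) * D))
      ∈ dJSet K π D (k + 1) := by
  apply mem_dJSet_of_formPairs
  have h : _ ∈ formPairs K π D k := Submodule.subset_span ⟨a 0, fun s => a s.succ, rfl⟩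
  convert Submodule.sub_mem _ h
    (gradedComm_mem_formPairs hγ hγD hη hchar (a 0) fun s : Fin k => a s.succ) using 1
  simp [prodComm_succ]

theorem grading_mul_prodComm {γ : Module.End K V} (hγπ : ∀ a, γ * π a = π a * γ)
    (hγD : γ * D = -(D * γ)) {k : ℕ} (c : Fin k → A) :
    γ * prodComm K π D c = (-1 : K) ^ k • (prodComm K π D c * γ) := by
  induction k with
  | zero => simp [prodComm]
  | succ k ih =>
    have h : γ * (D * π (c 0) - π (c 0) * D) = -((D * π (c 0) - π (c 0) * D) * γ) := by
      rw [mul_sub, ← mul_assoc, hγD, ← mul_assoc, hγπ, mul_assoc (π (c 0)), hγD, neg_mul,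
        mul_assoc D, hγπ]
      noncomm_ring
    rw [prodComm_succ, ← mul_assoc, h, neg_mul, mul_assoc, ih, mul_smul_comm, pow_succ, mul_neg_one,
      neg_smul, mul_assoc]

theorem grading_pow_mul_D {γ : Module.End K V} (hγD : γ * D = -(D * γ)) (j : ℕ) :
    D * γ ^ j = (-1 : K) ^ j • (γ ^ j * D) := by
  induction j with
  | zero => simp
  | succ j ih =>
    rw [pow_succ, ← mul_assoc, ih, smul_mul_assoc, mul_assoc (γ ^ j) γ, hγD, pow_succ]
    simp [mul_assoc]

end Pairs

/-- **Statement 7.** -/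
theorem tilde_d_of_tilde_J_mem
    (A₁ A₂ V₁ V₂ : Type*) [Ring A₁] [Algebra K A₁] [Ring A₂] [Algebra K A₂]
    [AddCommGroup V₁] [Module K V₁] [AddCommGroup V₂] [Module K V₂]
    (π₁ : A₁ →ₐ[K] Module.End K V₁) (π₂ : A₂ →ₐ[K] Module.End K V₂)
    (D₁ γ₁ : Module.End K V₁) (D₂ γ₂ : Module.End K V₂)
    (hγ₁ : γ₁ * γ₁ = 1) (hγπ₁ : ∀ a, γ₁ * π₁ a = π₁ a * γ₁) (hγD₁ : γ₁ * D₁ = -(D₁ * γ₁))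
    (hγ₂ : γ₂ * γ₂ = 1) (hγπ₂ : ∀ a, γ₂ * π₂ a = π₂ a * γ₂) (hγD₂ : γ₂ * D₂ = -(D₂ * γ₂))
    (η₁ : A₁) (hη₁ : π₁ η₁ = γ₁) (η₂ : A₂) (hη₂ : π₂ η₂ = γ₂)
    (hchar : (2 : K) ≠ 0)
    (n : ℕ) (hn : 1 ≤ n)
    (m : ℕ) (i j : Fin m → ℕ) (hij : ∀ t, i t + j t = n - 1)
    (a : ∀ t : Fin m, Fin (i t + 1) → A₁) (b : ∀ t : Fin m, Fin (j t + 1) → A₂)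
    -- the hypothesis `Σ_t (P_t ∘ γ₁^{j_t}) ⊗ Q_t = 0`:
    (hzero : ∑ t : Fin m,
        TensorProduct.map
          ((π₁ (a t 0) * prodComm K π₁ D₁ (fun s : Fin (i t) => a t s.succ)) * γ₁ ^ (j t)
            : V₁ →ₗ[K] V₁)
          ((π₂ (b t 0) * prodComm K π₂ D₂ (fun s : Fin (j t) => b t s.succ)) : V₂ →ₗ[K] V₂)
        = 0) :
    -- conclusion : `Σ_t (P′_t γ₁^{j_t}) ⊗ Q_t + (−1)^{i_t} (P_t γ₁^{j_t+1}) ⊗ Q′_t` lies in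
    -- `Σ_{i+j=n} span{(P γ₁^j) ⊗ Q : P ∈ π₁(dJ₀^{i−1}), Q ∈ π₂(Ω^j)}
    --           + span{(P γ₁^j) ⊗ Q : P ∈ π₁(Ω^i), Q ∈ π₂(dJ₀^{j−1})}`
    (∑ t : Fin m,
        (TensorProduct.map
          ((prodComm K π₁ D₁ (a t)) * γ₁ ^ (j t) : V₁ →ₗ[K] V₁)
          ((π₂ (b t 0) * prodComm K π₂ D₂ (fun s : Fin (j t) => b t s.succ)) : V₂ →ₗ[K] V₂)
        + ((-1 : K) ^ (i t)) •
          TensorProduct.map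
            ((π₁ (a t 0) * prodComm K π₁ D₁ (fun s : Fin (i t) => a t s.succ)) * γ₁ ^ (j t + 1)
              : V₁ →ₗ[K] V₁)
            ((prodComm K π₂ D₂ (b t)) : V₂ →ₗ[K] V₂)))
      ∈ ⨆ p : Fin (n + 1),
          (Submodule.span K
            {T : Module.End K (V₁ ⊗[K] V₂) |
              ∃ P ∈ dJSet K π₁ D₁ (p : ℕ), ∃ Q ∈ piOmega K π₂ D₂ (n - (p : ℕ)),
                T = TensorProduct.map ((P * γ₁ ^ (n - (p : ℕ))) : V₁ →ₗ[K] V₁) (Q : V₂ →ₗ[K] V₂)}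
          ⊔ Submodule.span K
            {T : Module.End K (V₁ ⊗[K] V₂) |
              ∃ P ∈ piOmega K π₁ D₁ (p : ℕ), ∃ Q ∈ dJSet K π₂ D₂ (n - (p : ℕ)),
                T = TensorProduct.map ((P * γ₁ ^ (n - (p : ℕ))) : V₁ →ₗ[K] V₁) (Q : V₂ →ₗ[K] V₂)}) := by
  set S := (⨆ p : Fin (n + 1), _ : Submodule K (Module.End K (V₁ ⊗[K] V₂)))
  set P : Fin m → Module.End K V₁ := fun t =>
    π₁ (a t 0) * prodComm K π₁ D₁ (fun s : Fin (i t) => a t s.succ) with hP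
  set Q : Fin m → Module.End K V₂ := fun t =>
    π₂ (b t 0) * prodComm K π₂ D₂ (fun s : Fin (j t) => b t s.succ)
  let X : Fin m → Module.End K (V₁ ⊗[K] V₂) := fun t =>
    TensorProduct.map (P t * γ₁ ^ j t) (Q t)
  have hX : ∑ t, X t = 0 := hzero
  let Y : Module.End K (V₁ ⊗[K] V₂) :=
    TensorProduct.map D₁ LinearMap.id + TensorProduct.map γ₁ D₂
  -- the graded commutator of the product Dirac operator with the vanishing sum
  have hE : ∑ t, (Y * X t - (-1 : K) ^ (n - 1) • (X t * Y)) = 0 := by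
    rw [Finset.sum_sub_distrib, ← Finset.mul_sum, ← Finset.smul_sum, ← Finset.sum_mul, hX]
    simp
  rw [← sub_zero (∑ t, _ : Module.End K (V₁ ⊗[K] V₂)), ← hE, ← Finset.sum_sub_distrib]
  refine Submodule.sum_mem _ fun t _ => ?_
  have hij' := hij t
  have h₁ := sub_gradedComm_mem_dJSet hγ₁ hγD₁ hη₁ hchar (a t)
  have h₂ := sub_gradedComm_mem_dJSet hγ₂ hγD₂ hη₂ hchar (b t)
  have hPΩ : P t ∈ piOmega K π₁ D₁ (i t) := Submodule.subset_span ⟨_, _, rfl⟩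
  have hQΩ : Q t ∈ piOmega K π₂ D₂ (j t) := Submodule.subset_span ⟨_, _, rfl⟩
  change _ - (D₁ * P t - (-1 : K) ^ i t • (P t * D₁)) ∈ _ at h₁
  change _ - (D₂ * Q t - (-1 : K) ^ j t • (Q t * D₂)) ∈ _ at h₂
  have hγP : γ₁ * P t = (-1 : K) ^ i t • (P t * γ₁) := by
    simp only [hP]
    rw [← mul_assoc, hγπ₁, mul_assoc, grading_mul_prodComm hγπ₁ hγD₁, mul_smul_comm, mul_assoc]
  have hDγ : D₁ * γ₁ ^ j t = (-1 : K) ^ j t • (γ₁ ^ j t * D₁) := grading_pow_mul_D hγD₁ _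
  have hsign : (-1 : K) ^ (n - 1) = (-1) ^ i t * (-1) ^ j t := by rw [← hij', pow_add]
  have hsq : (-1 : K) ^ j t * (-1) ^ j t = 1 := by rw [← mul_pow]; simp
  have hYX : Y * X t = TensorProduct.map (D₁ * P t * γ₁ ^ j t) (Q t) +
      (-1 : K) ^ i t • TensorProduct.map (P t * γ₁ ^ (j t + 1)) (D₂ * Q t) := by
    simp only [Y, X, add_mul, ← TensorProduct.map_mul, ← TensorProduct.map_smul_left]
    rw [← mul_assoc γ₁, hγP, smul_mul_assoc, mul_assoc (P t) γ₁, ← pow_succ', ← mul_assoc]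
    rfl
  have hXY : X t * Y =
      (-1 : K) ^ j t • TensorProduct.map (P t * D₁ * γ₁ ^ j t) (Q t) +
        TensorProduct.map (P t * γ₁ ^ (j t + 1)) (Q t * D₂) := by
    simp only [Y, X, mul_add, ← TensorProduct.map_mul, ← TensorProduct.map_smul_left]
    rw [mul_assoc (P t) D₁, hDγ, mul_smul_comm, smul_smul, hsq, one_smul, mul_assoc (P t) _ γ₁,
      ← pow_succ, mul_assoc]
    rfl
  have key : (TensorProduct.map (prodComm K π₁ D₁ (a t) * γ₁ ^ j t) (Q t) +
      (-1 : K) ^ i t • TensorProduct.map (P t * γ₁ ^ (j t + 1)) (prodComm K π₂ D₂ (b t))) -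
        (Y * X t - (-1 : K) ^ (n - 1) • (X t * Y)) =
      TensorProduct.map ((prodComm K π₁ D₁ (a t) -
        (D₁ * P t - (-1 : K) ^ i t • (P t * D₁))) * γ₁ ^ j t) (Q t) +
      (-1 : K) ^ i t • TensorProduct.map (P t * γ₁ ^ (j t + 1)) (prodComm K π₂ D₂ (b t) -
        (D₂ * Q t - (-1 : K) ^ j t • (Q t * D₂))) := by
    have hsubL : ∀ (f g : Module.End K V₁) (h : Module.End K V₂),
        TensorProduct.map (f - g) h = TensorProduct.map f h - TensorProduct.map g h :=
      fun f g h => LinearMap.map_sub₂ (TensorProduct.mapBilinear (.id K) V₁ V₂ V₁ V₂) f g h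
    have hsubR : ∀ (f : Module.End K V₁) (g h : Module.End K V₂),
        TensorProduct.map f (g - h) = TensorProduct.map f g - TensorProduct.map f h :=
      fun f g h => map_sub (TensorProduct.mapBilinear (.id K) V₁ V₂ V₁ V₂ f) g h
    rw [hYX, hXY, hsign]
    simp only [sub_mul, smul_mul_assoc, hsubL, hsubR, TensorProduct.map_smul_left,
      TensorProduct.map_smul_right, smul_sub, smul_add, smul_smul, mul_assoc, hsq, mul_one]
    abel
  refine key ▸ Submodule.add_mem _ ?_ (Submodule.smul_mem _ _ ?_)
  · refine Submodule.mem_iSup_of_mem (⟨i t + 1, by omega⟩ : Fin (n + 1))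
      (Submodule.mem_sup_left (Submodule.subset_span ?_))
    have hj : n - (i t + 1) = j t := by omega
    exact ⟨_, h₁, Q t, by simpa only [hj] using hQΩ, by simp only [hj]⟩
  · refine Submodule.mem_iSup_of_mem (⟨i t, by omega⟩ : Fin (n + 1))
      (Submodule.mem_sup_right (Submodule.subset_span ?_))
    have hj : n - i t = j t + 1 := by omega
    exact ⟨P t, hPΩ, _, by simpa only [hj] using h₂, by simp only [hj]⟩
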